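/- If f is six times continuously differentiable on [0,1] and x ∈ [0,1], then there exist a constant C > 0 and an integer N such that for all n ≥ N, |D̃_n^{M,2}(f; x) − f(x)| ≤ C/n^2; that is, D̃_n^{M,2}(f; x) − f(x) = O(1/n^2) as n → ∞. -/

import Mathlib

open Filter Topology

/-- Bernstein basis polynomial `p_{n,k}(x)`, zero when `k < 0` or `k > n`. -/
noncomputable def bern (n : ℕ) (k : ℤ) (x : ℝ) : ℝ :=
  if 0 ≤ k ∧ k ≤ (n : ℤ) then (n.choose k.toNat : ℝ) * x ^ k.toNat * (1 - x) ^ (n - k.toNat)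
  else 0

/-- Second-order modified Bernstein basis `p̃_{n,k}^{M,2}(x)`. -/
noncomputable def pM2 (n : ℕ) (k : ℤ) (x : ℝ) : ℝ :=
  (((n : ℝ) - 2) * x ^ 2 - (n : ℝ) * x + 3 / 2) * bern (n - 2) k x
    + 2 * ((n : ℝ) - 2) * x * (1 - x) * bern (n - 2) (k - 1) x
    + (((n : ℝ) - 2) * x ^ 2 - ((n : ℝ) - 4) * x - 1 / 2) * bern (n - 2) (k - 2) x

/-- Second-order modified Durrmeyer operator `D̃_n^{M,2}(f;x)`. -/
noncomputable def DM2 (n : ℕ) (f : ℝ → ℝ) (x : ℝ) : ℝ :=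
  ((n : ℝ) + 1) * ∑ k ∈ Finset.range (n + 1),
    pM2 n k x * ∫ t in (0:ℝ)..1, bern n k t * f t

/-! With `m = n - 2`, the modified operator is a combination of the Bernstein–Durrmeyer operators
`G₀₂`, `G₁₁`, `G₂₀` of order `m` with Jacobi weights `(1 - t) ^ 2`, `t * (1 - t)`, `t ^ 2`, whose
coefficients sum to `1` but are of size `m`. Integration by parts turns a difference of
neighbouring operators applied to `f` into an operator applied to `f'` and divided by its order, so
these coefficients get absorbed:
`D f = G₁₁ f + ((2x - 1/2) G₂₁ f' - (3/2 - 2x) G₁₂ f') / (m + 4)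
  - m x (1 - x) / ((m + 4) (m + 5)) * G₂₂ f''`.
The last three operators may be replaced by the identity up to `O(1 / m ^ 2)`, and what they
contribute is the opposite of the first two terms of the Voronovskaya expansion of `G₁₁ f - f`.
That expansion needs only the decay of the central moments, which follows from the recurrence that
the same integration by parts provides. -/

open Finset Polynomial Set

section Bernstein

variable {R : Type*} [CommRing R]

lemma succ_mul_eval_bernsteinPolynomial_succ (n k : ℕ) (x : R) :
    ((k : R) + 1) * (bernsteinPolynomial R (n + 1) (k + 1)).eval x
      = (n + 1) * x * (bernsteinPolynomial R n k).eval x := by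
  have hchoose : ((n + 1).choose (k + 1) : R) * (k + 1) = (n + 1) * n.choose k := by
    exact_mod_cast congrArg (Nat.cast (R := R)) (Nat.add_one_mul_choose_eq n k).symm
  simp only [bernsteinPolynomial, eval_mul, eval_natCast, eval_pow, eval_X, eval_sub, eval_one,
    Nat.succ_sub_succ]
  linear_combination x ^ (k + 1) * (1 - x) ^ (n - k) * hchoose

lemma sub_mul_eval_bernsteinPolynomial_succ (n k : ℕ) (x : R) :
    ((n : R) + 1 - k) * (bernsteinPolynomial R (n + 1) k).eval x
      = (n + 1) * (1 - x) * (bernsteinPolynomial R n k).eval x := by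
  rcases lt_trichotomy k (n + 1) with h | rfl | h
  · have hchoose : (n.choose k : R) * (n + 1) = (n + 1).choose k * (n + 1 - k) := by
      have := congrArg (Nat.cast (R := R)) (Nat.choose_mul_succ_eq n k)
      push_cast [Nat.cast_sub h.le] at this
      exact this
    have hpow : n + 1 - k = n - k + 1 := by omega
    simp only [bernsteinPolynomial, eval_mul, eval_natCast, eval_pow, eval_X, eval_sub, eval_one,
      hpow]
    linear_combination -x ^ k * (1 - x) ^ (n - k + 1) * hchoose
  · simp [bernsteinPolynomial.eq_zero_of_lt]
  · simp [bernsteinPolynomial.eq_zero_of_lt R h,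
      bernsteinPolynomial.eq_zero_of_lt R (Nat.lt_of_succ_lt h)]

lemma sum_eval_bernsteinPolynomial (n : ℕ) (x : R) :
    ∑ k ∈ range (n + 1), (bernsteinPolynomial R n k).eval x = 1 := by
  rw [← eval_finsetSum, bernsteinPolynomial.sum, eval_one]

lemma sum_eval_bernsteinPolynomial_mul_natCast_mul (n : ℕ) (x : R) (F : ℕ → R) :
    ∑ k ∈ range (n + 2), (bernsteinPolynomial R (n + 1) k).eval x * (k * F k)
      = (n + 1) * x * ∑ k ∈ range (n + 1), (bernsteinPolynomial R n k).eval x * F (k + 1) := by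
  rw [sum_range_succ', mul_sum]
  simp only [Nat.cast_zero, zero_mul, mul_zero, add_zero, Nat.cast_succ]
  refine sum_congr rfl fun k _ => ?_
  linear_combination F (k + 1) * succ_mul_eval_bernsteinPolynomial_succ n k x

lemma sum_eval_bernsteinPolynomial_mul_sub_mul (n : ℕ) (x : R) (F : ℕ → R) :
    ∑ k ∈ range (n + 2), (bernsteinPolynomial R (n + 1) k).eval x * ((n + 1 - k) * F k)
      = (n + 1) * (1 - x) * ∑ k ∈ range (n + 1), (bernsteinPolynomial R n k).eval x * F k := by
  rw [sum_range_succ, mul_sum]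
  simp only [Nat.cast_succ, sub_self, zero_mul, mul_zero, add_zero]
  refine sum_congr rfl fun k _ => ?_
  linear_combination F k * sub_mul_eval_bernsteinPolynomial_succ n k x

lemma eval_bernsteinPolynomial_nonneg (n k : ℕ) {x : ℝ} (hx : x ∈ Icc (0 : ℝ) 1) :
    0 ≤ (bernsteinPolynomial ℝ n k).eval x := by
  have h0 : 0 ≤ x := hx.1
  have h1 : 0 ≤ 1 - x := sub_nonneg.2 hx.2
  simp only [bernsteinPolynomial, eval_mul, eval_natCast, eval_pow, eval_X, eval_sub, eval_one]
  positivity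

end Bernstein

section BetaMean

/-- The mean of `g` under the Beta distribution with parameters `k + 1` and `n - k + 1`, whose
density on `[0, 1]` is `n + 1` times the `k`-th Bernstein basis polynomial of degree `n`. -/
noncomputable def betaMean (n k : ℕ) (g : ℝ → ℝ) : ℝ :=
  ((n : ℝ) + 1) * ∫ t in (0 : ℝ)..1, (bernsteinPolynomial ℝ n k).eval t * g t

lemma intervalIntegrable_eval_mul (p : ℝ[X]) {g : ℝ → ℝ} (hg : ContinuousOn g (Icc 0 1)) :
    IntervalIntegrable (fun t => p.eval t * g t) MeasureTheory.volume 0 1 :=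
  (p.continuousOn.mul hg).intervalIntegrable_of_Icc zero_le_one

lemma betaMean_sub (n k : ℕ) {g h : ℝ → ℝ} (hg : ContinuousOn g (Icc 0 1))
    (hh : ContinuousOn h (Icc 0 1)) :
    betaMean n k (fun t => g t - h t) = betaMean n k g - betaMean n k h := by
  simp only [betaMean, mul_sub]
  rw [intervalIntegral.integral_sub (intervalIntegrable_eval_mul _ hg)
    (intervalIntegrable_eval_mul _ hh), mul_sub]

lemma betaMean_const_mul (n k : ℕ) (c : ℝ) (g : ℝ → ℝ) :
    betaMean n k (fun t => c * g t) = c * betaMean n k g := by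
  rw [betaMean, betaMean, mul_left_comm, ← intervalIntegral.integral_const_mul c]
  simp only [mul_left_comm c]

lemma betaMean_sum {ι : Type*} (s : Finset ι) (n k : ℕ) {g : ι → ℝ → ℝ}
    (hg : ∀ i ∈ s, ContinuousOn (g i) (Icc 0 1)) :
    betaMean n k (fun t => ∑ i ∈ s, g i t) = ∑ i ∈ s, betaMean n k (g i) := by
  simp only [betaMean, mul_sum]
  rw [intervalIntegral.integral_finsetSum fun i hi => intervalIntegrable_eval_mul _ (hg i hi),
    mul_sum]

lemma abs_betaMean_le (n k : ℕ) {g h : ℝ → ℝ} (hh : ContinuousOn h (Icc 0 1))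
    (hgh : ∀ t ∈ Icc (0 : ℝ) 1, |g t| ≤ h t) : |betaMean n k g| ≤ betaMean n k h := by
  have hn : (0 : ℝ) ≤ n + 1 := by positivity
  rw [betaMean, betaMean, abs_mul, abs_of_nonneg hn]
  refine mul_le_mul_of_nonneg_left ?_ hn
  rw [← Real.norm_eq_abs]
  refine intervalIntegral.norm_integral_le_of_norm_le zero_le_one
    (.of_forall fun t ht => ?_) (intervalIntegrable_eval_mul _ hh)
  have hB := eval_bernsteinPolynomial_nonneg n k (Ioc_subset_Icc_self ht)
  rw [Real.norm_eq_abs, abs_mul, abs_of_nonneg hB]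
  exact mul_le_mul_of_nonneg_left (hgh t (Ioc_subset_Icc_self ht)) hB

lemma betaMean_id_mul (n k : ℕ) (g : ℝ → ℝ) :
    ((n : ℝ) + 2) * betaMean n k (fun t => t * g t) = (k + 1) * betaMean (n + 1) (k + 1) g := by
  have hB : ∀ t : ℝ, ((k : ℝ) + 1) * ((bernsteinPolynomial ℝ (n + 1) (k + 1)).eval t * g t)
      = (n + 1) * ((bernsteinPolynomial ℝ n k).eval t * (t * g t)) := fun t => by
    linear_combination g t * succ_mul_eval_bernsteinPolynomial_succ n k t
  rw [betaMean, betaMean, mul_left_comm ((k : ℝ) + 1),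
    ← intervalIntegral.integral_const_mul ((k : ℝ) + 1)]
  simp only [hB, intervalIntegral.integral_const_mul]
  push_cast
  ring

lemma betaMean_one_sub_mul (n k : ℕ) (g : ℝ → ℝ) :
    ((n : ℝ) + 2) * betaMean n k (fun t => (1 - t) * g t)
      = (n + 1 - k) * betaMean (n + 1) k g := by
  have hB : ∀ t : ℝ, ((n : ℝ) + 1 - k) * ((bernsteinPolynomial ℝ (n + 1) k).eval t * g t)
      = (n + 1) * ((bernsteinPolynomial ℝ n k).eval t * ((1 - t) * g t)) := fun t => by
    linear_combination g t * sub_mul_eval_bernsteinPolynomial_succ n k t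
  rw [betaMean, betaMean, mul_left_comm ((n : ℝ) + 1 - k),
    ← intervalIntegral.integral_const_mul ((n : ℝ) + 1 - k)]
  simp only [hB, intervalIntegral.integral_const_mul]
  push_cast
  ring

lemma betaMean_succ_sub_betaMean {n k : ℕ} (hk : k < n) {g g' : ℝ → ℝ}
    (hg : ∀ t ∈ Icc (0 : ℝ) 1, HasDerivWithinAt g (g' t) (Icc 0 1) t)
    (hg' : ContinuousOn g' (Icc 0 1)) :
    betaMean n (k + 1) g - betaMean n k g = betaMean (n + 1) (k + 1) g' / (n + 2) := by
  have hgc : ContinuousOn g (Icc 0 1) := HasDerivWithinAt.continuousOn hg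
  have hparts := intervalIntegral.integral_mul_deriv_eq_deriv_mul_of_hasDerivWithinAt
    (a := 0) (b := 1) (u := fun t => (bernsteinPolynomial ℝ (n + 1) (k + 1)).eval t) (v := g)
    (fun t _ => (Polynomial.hasDerivAt _ t).hasDerivWithinAt)
    (by rwa [Set.uIcc_of_le zero_le_one]) ((Polynomial.continuous _).intervalIntegrable _ _)
    (hg'.intervalIntegrable_of_Icc zero_le_one)
  have hderiv : ∀ t : ℝ, (derivative (bernsteinPolynomial ℝ (n + 1) (k + 1))).eval t * g t
      = (n + 1) * ((bernsteinPolynomial ℝ n k).eval t * g t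
        - (bernsteinPolynomial ℝ n (k + 1)).eval t * g t) := fun t => by
    rw [bernsteinPolynomial.derivative_succ_aux]
    simp only [eval_mul, eval_add, eval_sub, eval_natCast, eval_one]
    ring
  simp only [hderiv, bernsteinPolynomial.eval_at_0, bernsteinPolynomial.eval_at_1,
    Nat.succ_ne_zero, Nat.succ_inj, hk.ne, if_false, zero_mul, sub_self, zero_sub] at hparts
  rw [intervalIntegral.integral_const_mul, intervalIntegral.integral_sub
    (intervalIntegrable_eval_mul _ hgc) (intervalIntegrable_eval_mul _ hgc)] at hparts
  simp only [betaMean, hparts]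
  push_cast
  field_simp
  ring

lemma betaMean_one {n k : ℕ} (hk : k ≤ n) : betaMean n k (fun _ => 1) = 1 := by
  have hstep : ∀ j < n, betaMean n (j + 1) (fun _ => 1) = betaMean n j (fun _ => 1) :=
    fun j hj => by
      have h := betaMean_succ_sub_betaMean hj (g := fun _ => 1) (g' := fun _ => 0)
        (fun t _ => hasDerivWithinAt_const ..) continuousOn_const
      simpa [betaMean, sub_eq_zero] using h
  have hconst : ∀ j ≤ n, betaMean n j (fun _ => 1) = betaMean n 0 (fun _ => 1) := fun j => by
    induction j with
    | zero => exact fun _ => rfl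
    | succ j ih => exact fun hj => (hstep j hj).trans (ih (Nat.le_of_succ_le hj))
  have hsum : ∑ j ∈ range (n + 1), betaMean n j (fun _ => 1) = n + 1 := by
    simp only [betaMean, mul_one]
    rw [← mul_sum, ← intervalIntegral.integral_finsetSum fun j _ =>
      (Polynomial.continuous _).intervalIntegrable _ _]
    simp [sum_eval_bernsteinPolynomial]
  rw [sum_congr rfl fun j hj => hconst j (Nat.le_of_lt_succ (mem_range.1 hj)), sum_const,
    card_range, nsmul_eq_mul, Nat.cast_succ] at hsum
  rw [hconst k hk]
  exact mul_left_cancel₀ (by positivity) (hsum.trans (mul_one _).symm)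

end BetaMean

section JacobiDurrmeyer

/-- The Bernstein–Durrmeyer operator of order `m` with Jacobi weight `t ^ a * (1 - t) ^ b`: up to
normalisation, `t ^ a * (1 - t) ^ b` times the `k`-th Bernstein basis polynomial of degree `m` is
the density averaged by `betaMean (m + a + b) (k + a)`. -/
noncomputable def jacobiDurrmeyer (a b m : ℕ) (g : ℝ → ℝ) (x : ℝ) : ℝ :=
  ∑ k ∈ range (m + 1), (bernsteinPolynomial ℝ m k).eval x * betaMean (m + a + b) (k + a) g

variable (a b m : ℕ) (x : ℝ)

lemma jacobiDurrmeyer_sub {g h : ℝ → ℝ} (hg : ContinuousOn g (Icc 0 1))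
    (hh : ContinuousOn h (Icc 0 1)) :
    jacobiDurrmeyer a b m (fun t => g t - h t) x
      = jacobiDurrmeyer a b m g x - jacobiDurrmeyer a b m h x := by
  simp only [jacobiDurrmeyer, betaMean_sub _ _ hg hh, mul_sub, sum_sub_distrib]

lemma jacobiDurrmeyer_const_mul (c : ℝ) (g : ℝ → ℝ) :
    jacobiDurrmeyer a b m (fun t => c * g t) x = c * jacobiDurrmeyer a b m g x := by
  simp only [jacobiDurrmeyer, betaMean_const_mul, mul_left_comm _ c, mul_sum]

lemma jacobiDurrmeyer_sum {ι : Type*} (s : Finset ι) {g : ι → ℝ → ℝ}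
    (hg : ∀ i ∈ s, ContinuousOn (g i) (Icc 0 1)) :
    jacobiDurrmeyer a b m (fun t => ∑ i ∈ s, g i t) x
      = ∑ i ∈ s, jacobiDurrmeyer a b m (g i) x := by
  simp only [jacobiDurrmeyer, betaMean_sum s _ _ hg, mul_sum]
  exact sum_comm

lemma jacobiDurrmeyer_one : jacobiDurrmeyer a b m (fun _ => 1) x = 1 := by
  refine Eq.trans (sum_congr rfl fun k hk => ?_) (sum_eval_bernsteinPolynomial m x)
  rw [betaMean_one (by have := mem_range.1 hk; omega), mul_one]

variable {x} in
lemma abs_jacobiDurrmeyer_le (hx : x ∈ Icc (0 : ℝ) 1) {g h : ℝ → ℝ}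
    (hh : ContinuousOn h (Icc 0 1)) (hgh : ∀ t ∈ Icc (0 : ℝ) 1, |g t| ≤ h t) :
    |jacobiDurrmeyer a b m g x| ≤ jacobiDurrmeyer a b m h x := by
  refine (abs_sum_le_sum_abs _ _).trans (sum_le_sum fun k _ => ?_)
  have hB := eval_bernsteinPolynomial_nonneg m k hx
  rw [abs_mul, abs_of_nonneg hB]
  exact mul_le_mul_of_nonneg_left (abs_betaMean_le _ _ hh hgh) hB

lemma jacobiDurrmeyer_id_mul (g : ℝ → ℝ) :
    ((m : ℝ) + a + b + 2) * jacobiDurrmeyer a b m (fun t => t * g t) x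
      = (a + 1) * jacobiDurrmeyer (a + 1) b m g x
        + m * x * jacobiDurrmeyer (a + 2) b (m - 1) g x := by
  have hsplit : ((m : ℝ) + a + b + 2) * jacobiDurrmeyer a b m (fun t => t * g t) x
      = (a + 1) * jacobiDurrmeyer (a + 1) b m g x
        + ∑ k ∈ range (m + 1), (bernsteinPolynomial ℝ m k).eval x
          * (k * betaMean (m + a + b + 1) (k + a + 1) g) := by
    rw [jacobiDurrmeyer, jacobiDurrmeyer, mul_sum, mul_sum, ← sum_add_distrib]
    refine sum_congr rfl fun k _ => ?_
    have h := betaMean_id_mul (m + a + b) (k + a) g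
    push_cast at h
    rw [show m + (a + 1) + b = m + a + b + 1 by ring, ← add_assoc k a 1]
    linear_combination (bernsteinPolynomial ℝ m k).eval x * h
  rw [hsplit, add_right_inj]
  cases m with
  | zero => simp
  | succ m =>
    rw [sum_eval_bernsteinPolynomial_mul_natCast_mul m x
      fun k => betaMean (m + 1 + a + b + 1) (k + a + 1) g, jacobiDurrmeyer, Nat.add_sub_cancel,
      Nat.cast_succ, show m + (a + 2) + b = m + 1 + a + b + 1 by ring]
    simp only [show ∀ k, k + (a + 2) = k + 1 + a + 1 from fun k => by ring]

lemma jacobiDurrmeyer_one_sub_mul (g : ℝ → ℝ) :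
    ((m : ℝ) + a + b + 2) * jacobiDurrmeyer a b m (fun t => (1 - t) * g t) x
      = (b + 1) * jacobiDurrmeyer a (b + 1) m g x
        + m * (1 - x) * jacobiDurrmeyer a (b + 2) (m - 1) g x := by
  have hsplit : ((m : ℝ) + a + b + 2) * jacobiDurrmeyer a b m (fun t => (1 - t) * g t) x
      = (b + 1) * jacobiDurrmeyer a (b + 1) m g x
        + ∑ k ∈ range (m + 1), (bernsteinPolynomial ℝ m k).eval x
          * ((m - k) * betaMean (m + a + b + 1) (k + a) g) := by
    rw [jacobiDurrmeyer, jacobiDurrmeyer, mul_sum, mul_sum, ← sum_add_distrib]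
    refine sum_congr rfl fun k _ => ?_
    have h := betaMean_one_sub_mul (m + a + b) (k + a) g
    push_cast at h
    rw [← add_assoc (m + a) b 1]
    linear_combination (bernsteinPolynomial ℝ m k).eval x * h
  rw [hsplit, add_right_inj]
  cases m with
  | zero => simp
  | succ m =>
    simp only [Nat.cast_succ]
    rw [sum_eval_bernsteinPolynomial_mul_sub_mul m x
      fun k => betaMean (m + 1 + a + b + 1) (k + a) g, jacobiDurrmeyer]
    simp only [Nat.add_sub_cancel, show m + a + (b + 2) = m + 1 + a + b + 1 by ring]

variable {g g' : ℝ → ℝ} (hg : ∀ t ∈ Icc (0 : ℝ) 1, HasDerivWithinAt g (g' t) (Icc 0 1) t)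
  (hg' : ContinuousOn g' (Icc 0 1))

include hg hg'

lemma jacobiDurrmeyer_succ_left_sub_succ_right :
    jacobiDurrmeyer (a + 1) b m g x - jacobiDurrmeyer a (b + 1) m g x
      = jacobiDurrmeyer (a + 1) (b + 1) m g' x / (m + a + b + 3) := by
  simp only [jacobiDurrmeyer]
  rw [← sum_sub_distrib, sum_div]
  refine sum_congr rfl fun k hk => ?_
  have hk' : k + a < m + a + b + 1 := by have := mem_range.1 hk; omega
  have h := betaMean_succ_sub_betaMean hk' hg hg'
  push_cast at h
  rw [← mul_sub, show m + (a + 1) + b = m + a + b + 1 by ring, ← add_assoc (m + a) b 1,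
    ← add_assoc k a 1, h, show m + (a + 1) + (b + 1) = m + a + b + 1 + 1 by ring]
  ring

/-- The two terms of `t - x = (1 - x) * t - x * (1 - t)` lead to operators of the same order, and
the difference of these is an operator applied to `g'`, divided by its order. -/
lemma jacobiDurrmeyer_sub_mul :
    ((m : ℝ) + a + b + 2) * jacobiDurrmeyer a b m (fun t => (t - x) * g t) x
      = (a + 1) * (1 - x) * jacobiDurrmeyer (a + 1) b m g x
        - (b + 1) * x * jacobiDurrmeyer a (b + 1) m g x
        + m * (x * (1 - x)) / (m + a + b + 3)
          * (jacobiDurrmeyer (a + 2) (b + 1) (m - 1) g' x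
            + jacobiDurrmeyer (a + 1) (b + 2) (m - 1) g' x) := by
  have hgc : ContinuousOn g (Icc 0 1) := HasDerivWithinAt.continuousOn hg
  have hsplit : jacobiDurrmeyer a b m (fun t => (t - x) * g t) x
      = (1 - x) * jacobiDurrmeyer a b m (fun t => t * g t) x
        - x * jacobiDurrmeyer a b m (fun t => (1 - t) * g t) x := by
    rw [← jacobiDurrmeyer_const_mul, ← jacobiDurrmeyer_const_mul,
      ← jacobiDurrmeyer_sub _ _ _ _ (by fun_prop) (by fun_prop)]
    congr 1
    funext t
    ring
  have hdiff : (m : ℝ) * (jacobiDurrmeyer (a + 2) b (m - 1) g x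
        - jacobiDurrmeyer a (b + 2) (m - 1) g x)
      = m / (m + a + b + 3) * (jacobiDurrmeyer (a + 2) (b + 1) (m - 1) g' x
          + jacobiDurrmeyer (a + 1) (b + 2) (m - 1) g' x) := by
    cases m with
    | zero => simp
    | succ m =>
      have hleft := jacobiDurrmeyer_succ_left_sub_succ_right (a + 1) b m x hg hg'
      have hright := jacobiDurrmeyer_succ_left_sub_succ_right a (b + 1) m x hg hg'
      push_cast at hleft hright ⊢
      rw [← sub_add_sub_cancel _ (jacobiDurrmeyer (a + 1) (b + 1) m g x),
        hleft, hright]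
      ring
  have hid := jacobiDurrmeyer_id_mul a b m x g
  have hone_sub := jacobiDurrmeyer_one_sub_mul a b m x g
  rw [hsplit]
  linear_combination (1 - x) * hid - x * hone_sub + x * (1 - x) * hdiff

end JacobiDurrmeyer

section Taylor

lemma exists_norm_sub_taylorWithinEval_le {E : Type*} [NormedAddCommGroup E] [NormedSpace ℝ E]
    {f : ℝ → E} {a b : ℝ} {n : ℕ} (hab : a < b) (hf : ContDiffOn ℝ (n + 1) f (Icc a b)) :
    ∃ M : ℝ, ∀ x ∈ Icc a b, ∀ t ∈ Icc a b,
      ‖f t - taylorWithinEval f n (Icc a b) x t‖ ≤ M * |t - x| ^ (n + 1) := by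
  have hunique : UniqueDiffOn ℝ (Icc a b) := uniqueDiffOn_Icc hab
  obtain ⟨M, hM⟩ := isCompact_Icc.exists_bound_of_continuousOn
    (hf.continuousOn_iteratedDerivWithin (m := n + 1) le_rfl hunique)
  refine ⟨M / n.factorial, fun x hx t ht => ?_⟩
  have hsub : uIcc x t ⊆ Icc a b := uIcc_subset_Icc hx ht
  have hderiv : ∀ y ∈ uIcc x t, HasDerivWithinAt (fun y => taylorWithinEval f n (Icc a b) y t)
      (((n.factorial : ℝ)⁻¹ * (t - y) ^ n) • iteratedDerivWithin (n + 1) f (Icc a b) y)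
      (uIcc x t) y := fun y hy =>
    (hasDerivWithinAt_taylorWithinEval_at_Icc t hab (hsub hy) (hf.of_le (by norm_cast; omega))
      (hf.differentiableOn_iteratedDerivWithin (by norm_cast; omega) hunique)).mono hsub
  have hbound : ∀ y ∈ uIcc x t,
      ‖((n.factorial : ℝ)⁻¹ * (t - y) ^ n) • iteratedDerivWithin (n + 1) f (Icc a b) y‖
        ≤ M / n.factorial * |t - x| ^ n := fun y hy => by
    rw [norm_smul, norm_mul, norm_inv, norm_pow, Real.norm_natCast, Real.norm_eq_abs,
      div_eq_inv_mul, mul_right_comm]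
    have hMy := hM y (hsub hy)
    have hM₀ : 0 ≤ M := (norm_nonneg _).trans hMy
    have hyt : |t - y| ≤ |t - x| := abs_sub_right_of_mem_uIcc hy
    gcongr
  have hmvt := Convex.norm_image_sub_le_of_norm_hasDerivWithin_le hderiv hbound
    (convex_uIcc x t) left_mem_uIcc right_mem_uIcc
  rwa [taylorWithinEval_self, Real.norm_eq_abs, mul_assoc, ← pow_succ] at hmvt

end Taylor

section Moments

/-- The `j`-th central moment of `jacobiDurrmeyer a b m` at `x`. -/
noncomputable def jacobiDurrmeyerMoment (a b m j : ℕ) (x : ℝ) : ℝ :=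
  jacobiDurrmeyer a b m (fun t => (t - x) ^ j) x

lemma jacobiDurrmeyerMoment_zero (a b m : ℕ) (x : ℝ) : jacobiDurrmeyerMoment a b m 0 x = 1 := by
  simp only [jacobiDurrmeyerMoment, pow_zero, jacobiDurrmeyer_one]

lemma jacobiDurrmeyerMoment_succ (a b m j : ℕ) (x : ℝ) :
    ((m : ℝ) + a + b + 2) * jacobiDurrmeyerMoment a b m (j + 1) x
      = (a + 1) * (1 - x) * jacobiDurrmeyerMoment (a + 1) b m j x
        - (b + 1) * x * jacobiDurrmeyerMoment a (b + 1) m j x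
        + m * (x * (1 - x)) / (m + a + b + 3) * (j
          * (jacobiDurrmeyerMoment (a + 2) (b + 1) (m - 1) (j - 1) x
            + jacobiDurrmeyerMoment (a + 1) (b + 2) (m - 1) (j - 1) x)) := by
  have hderiv : ∀ t ∈ Icc (0 : ℝ) 1,
      HasDerivWithinAt (fun t => (t - x) ^ j) (j * (t - x) ^ (j - 1)) (Icc 0 1) t := fun t _ => by
    simpa using (((hasDerivAt_id t).sub_const x).fun_pow j).hasDerivWithinAt
  have h := jacobiDurrmeyer_sub_mul a b m x hderiv (by fun_prop)
  simp only [jacobiDurrmeyer_const_mul, ← pow_succ'] at h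
  rw [mul_add (j : ℝ)]
  exact h

lemma jacobiDurrmeyerMoment_one (a b m : ℕ) (x : ℝ) :
    jacobiDurrmeyerMoment a b m 1 x = ((a + 1) * (1 - x) - (b + 1) * x) / (m + a + b + 2) := by
  have h := jacobiDurrmeyerMoment_succ a b m 0 x
  simp only [jacobiDurrmeyerMoment_zero, Nat.cast_zero, zero_mul, mul_zero, add_zero, mul_one,
    zero_add] at h
  rw [eq_div_iff (by positivity), mul_comm, h]

lemma jacobiDurrmeyerMoment_two (a b m : ℕ) (x : ℝ) :
    jacobiDurrmeyerMoment a b m 2 x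
      = ((a + 1) * (1 - x) * jacobiDurrmeyerMoment (a + 1) b m 1 x
        - (b + 1) * x * jacobiDurrmeyerMoment a (b + 1) m 1 x) / (m + a + b + 2)
        + 2 * (m * (x * (1 - x)) / ((m + a + b + 2) * (m + a + b + 3))) := by
  have h := jacobiDurrmeyerMoment_succ a b m 1 x
  simp only [Nat.sub_self, jacobiDurrmeyerMoment_zero, Nat.cast_one, one_mul] at h
  field_simp at h ⊢
  linear_combination h

lemma natCast_mul_mul_one_sub_le (m : ℕ) {x : ℝ} (hx : x ∈ Icc (0 : ℝ) 1) :
    m * (x * (1 - x)) ≤ (m : ℝ) :=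
  mul_le_of_le_one_right (Nat.cast_nonneg m)
    (mul_le_one₀ hx.2 (sub_nonneg.2 hx.2) (sub_le_self 1 hx.1))

lemma mul_abs_jacobiDurrmeyerMoment_succ_le (a b m j : ℕ) {x : ℝ} (hx : x ∈ Icc (0 : ℝ) 1) :
    ((m : ℝ) + a + b + 2) * |jacobiDurrmeyerMoment a b m (j + 1) x|
      ≤ (a + 1) * |jacobiDurrmeyerMoment (a + 1) b m j x|
        + (b + 1) * |jacobiDurrmeyerMoment a (b + 1) m j x|
        + j * (|jacobiDurrmeyerMoment (a + 2) (b + 1) (m - 1) (j - 1) x|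
          + |jacobiDurrmeyerMoment (a + 1) (b + 2) (m - 1) (j - 1) x|) := by
  have hx₀ : 0 ≤ x := hx.1
  have hx₁ : 0 ≤ 1 - x := sub_nonneg.2 hx.2
  have hvar : m * (x * (1 - x)) / ((m : ℝ) + a + b + 3) ≤ 1 := by
    rw [div_le_one (by positivity)]
    linarith [natCast_mul_mul_one_sub_le m hx, Nat.cast_nonneg (α := ℝ) a,
      Nat.cast_nonneg (α := ℝ) b]
  have hν : (0 : ℝ) ≤ m + a + b + 2 := by positivity
  rw [← abs_of_nonneg hν, ← abs_mul, jacobiDurrmeyerMoment_succ]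
  refine (abs_add_le _ _).trans (add_le_add ((abs_sub _ _).trans (add_le_add ?_ ?_)) ?_)
  · rw [abs_mul, abs_of_nonneg (by positivity)]
    gcongr
    exact mul_le_of_le_one_right (by positivity) (sub_le_self 1 hx₀)
  · rw [abs_mul, abs_of_nonneg (by positivity)]
    gcongr
    exact mul_le_of_le_one_right (by positivity) hx.2
  · rw [abs_mul, abs_of_nonneg (by positivity), abs_mul, Nat.abs_cast]
    refine (mul_le_of_le_one_left (by positivity) hvar).trans ?_
    gcongr
    exact abs_add_le _ _

lemma exists_pow_mul_abs_jacobiDurrmeyerMoment_le (a b j : ℕ) :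
    ∃ C : ℝ, ∀ m : ℕ, ∀ x ∈ Icc (0 : ℝ) 1,
      ((m : ℝ) + a + b + 1) ^ ((j + 1) / 2) * |jacobiDurrmeyerMoment a b m j x| ≤ C := by
  induction j using Nat.strong_induction_on generalizing a b with
  | _ j ih =>
  rcases j with _ | j
  · exact ⟨1, fun m x _ => by simp [jacobiDurrmeyerMoment_zero]⟩
  have hlower : ∀ a' b' : ℕ, ∀ i < j + 1, j / 2 ≤ (i + 1) / 2 →
      ∃ C : ℝ, ∀ m m' : ℕ, ∀ x ∈ Icc (0 : ℝ) 1, m + a + b ≤ m' + a' + b' →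
        ((m : ℝ) + a + b + 1) ^ (j / 2) * |jacobiDurrmeyerMoment a' b' m' i x| ≤ C := by
    intro a' b' i hi hij
    obtain ⟨C, hC⟩ := ih i hi a' b'
    refine ⟨C, fun m m' x hx hm => le_trans ?_ (hC m' x hx)⟩
    have hm' : (m : ℝ) + a + b ≤ m' + a' + b' := by exact_mod_cast hm
    gcongr ?_ * _
    calc ((m : ℝ) + a + b + 1) ^ (j / 2) ≤ (m' + a' + b' + 1) ^ (j / 2) := by gcongr
      _ ≤ (m' + a' + b' + 1) ^ ((i + 1) / 2) :=
        pow_le_pow_right₀ (le_add_of_nonneg_left (by positivity)) hij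
  obtain ⟨C₁, h₁⟩ := hlower (a + 1) b j (by omega) (by omega)
  obtain ⟨C₂, h₂⟩ := hlower a (b + 1) j (by omega) (by omega)
  obtain ⟨C₃, h₃⟩ := hlower (a + 2) (b + 1) (j - 1) (by omega) (by omega)
  obtain ⟨C₄, h₄⟩ := hlower (a + 1) (b + 2) (j - 1) (by omega) (by omega)
  refine ⟨(a + 1) * C₁ + (b + 1) * C₂ + j * (C₃ + C₄), fun m x hx => ?_⟩
  specialize h₁ m m x hx (by omega)
  specialize h₂ m m x hx (by omega)
  specialize h₃ m (m - 1) x hx (by omega)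
  specialize h₄ m (m - 1) x hx (by omega)
  set ν : ℝ := (m : ℝ) + a + b + 1 with hν
  have hstep : ν * |jacobiDurrmeyerMoment a b m (j + 1) x| ≤ _ :=
    (mul_le_mul_of_nonneg_right (by linarith [hν]) (abs_nonneg _)).trans
      (mul_abs_jacobiDurrmeyerMoment_succ_le a b m j hx)
  rw [show (j + 1 + 1) / 2 = j / 2 + 1 by omega, pow_succ, mul_assoc]
  refine (mul_le_mul_of_nonneg_left hstep (by positivity)).trans ?_
  rw [mul_add, mul_add, mul_left_comm _ ((a : ℝ) + 1), mul_left_comm _ ((b : ℝ) + 1),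
    mul_left_comm _ (j : ℝ), mul_add (ν ^ (j / 2))]
  gcongr

end Moments

section Asymptotics

lemma mul_abs_add_le {ν y z K L : ℝ} (hν : 0 ≤ ν) (hy : ν * |y| ≤ K) (hz : ν * |z| ≤ L) :
    ν * |y + z| ≤ K + L := by
  linarith [mul_le_mul_of_nonneg_left (abs_add_le y z) hν]

lemma mul_abs_mul_le {ν c y K L : ℝ} (hν : 0 ≤ ν) (hc : |c| ≤ K) (hy : ν * |y| ≤ L) :
    ν * |c * y| ≤ K * L := by
  have hK : 0 ≤ K := (abs_nonneg c).trans hc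
  rw [abs_mul, mul_left_comm]
  gcongr

lemma sq_mul_abs_div_le {ν ω y K : ℝ} (hν : 0 ≤ ν) (hω : ν < ω) (hy : ω * |y| ≤ K) :
    ν ^ 2 * |y / ω| ≤ K := by
  have hω₀ : 0 < ω := hν.trans_lt hω
  calc ν ^ 2 * |y / ω| ≤ ω ^ 2 * |y / ω| := by gcongr
    _ = ω * |y| := by
      rw [abs_div, abs_of_pos hω₀]
      field_simp
    _ ≤ K := hy

variable {f : ℝ → ℝ} (a b : ℕ)

lemma exists_pow_mul_abs_jacobiDurrmeyer_sub_sum_le (r : ℕ)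
    (hf : ContDiffOn ℝ (2 * r + 2 : ℕ) f (Icc 0 1)) :
    ∃ C : ℝ, ∀ m : ℕ, ∀ x ∈ Icc (0 : ℝ) 1,
      ((m : ℝ) + a + b + 1) ^ (r + 1) * |jacobiDurrmeyer a b m f x
        - ∑ k ∈ range (2 * r + 2), (k.factorial : ℝ)⁻¹ * iteratedDerivWithin k f (Icc 0 1) x
          * jacobiDurrmeyerMoment a b m k x| ≤ C := by
  obtain ⟨M, hM⟩ := exists_norm_sub_taylorWithinEval_le (n := 2 * r + 1) zero_lt_one
    (by exact_mod_cast hf)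
  obtain ⟨C, hC⟩ := exists_pow_mul_abs_jacobiDurrmeyerMoment_le a b (2 * r + 2)
  refine ⟨|M| * C, fun m x hx => ?_⟩
  have htaylor : jacobiDurrmeyer a b m
        (fun t => f t - taylorWithinEval f (2 * r + 1) (Icc 0 1) x t) x
      = jacobiDurrmeyer a b m f x
        - ∑ k ∈ range (2 * r + 2), (k.factorial : ℝ)⁻¹ * iteratedDerivWithin k f (Icc 0 1) x
          * jacobiDurrmeyerMoment a b m k x := by
    simp only [taylor_within_apply, smul_eq_mul, mul_right_comm _ (_ ^ _)]
    rw [jacobiDurrmeyer_sub _ _ _ _ hf.continuousOn (by fun_prop),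
      jacobiDurrmeyer_sum _ _ _ _ _ fun k _ => by fun_prop]
    simp only [jacobiDurrmeyer_const_mul, jacobiDurrmeyerMoment]
  have hremainder : |jacobiDurrmeyer a b m
        (fun t => f t - taylorWithinEval f (2 * r + 1) (Icc 0 1) x t) x|
      ≤ |M| * jacobiDurrmeyerMoment a b m (2 * r + 2) x := by
    rw [jacobiDurrmeyerMoment, ← jacobiDurrmeyer_const_mul]
    refine abs_jacobiDurrmeyer_le a b m hx (by fun_prop) fun t ht => (hM x hx t ht).trans ?_
    rw [Even.pow_abs ⟨r + 1, by ring⟩]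
    exact mul_le_mul_of_nonneg_right (le_abs_self M) (Even.pow_nonneg ⟨r + 1, by ring⟩ _)
  have hmoment := hC m x hx
  rw [show (2 * r + 2 + 1) / 2 = r + 1 by omega] at hmoment
  rw [← htaylor]
  calc _ ≤ ((m : ℝ) + a + b + 1) ^ (r + 1)
        * (|M| * |jacobiDurrmeyerMoment a b m (2 * r + 2) x|) := by
        gcongr
        exact hremainder.trans (by gcongr; exact le_abs_self _)
    _ = |M| * (((m : ℝ) + a + b + 1) ^ (r + 1)
        * |jacobiDurrmeyerMoment a b m (2 * r + 2) x|) := mul_left_comm ..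
    _ ≤ |M| * C := by gcongr

lemma exists_mul_abs_jacobiDurrmeyer_sub_le (hf : ContDiffOn ℝ 2 f (Icc 0 1)) :
    ∃ C : ℝ, ∀ m : ℕ, ∀ x ∈ Icc (0 : ℝ) 1,
      ((m : ℝ) + a + b + 1) * |jacobiDurrmeyer a b m f x - f x| ≤ C := by
  obtain ⟨C, hC⟩ := exists_pow_mul_abs_jacobiDurrmeyer_sub_sum_le a b 0 (by exact_mod_cast hf)
  obtain ⟨K, hK⟩ := exists_pow_mul_abs_jacobiDurrmeyerMoment_le a b 1
  obtain ⟨L, hL⟩ := isCompact_Icc.exists_bound_of_continuousOn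
    (hf.continuousOn_derivWithin (uniqueDiffOn_Icc zero_lt_one) one_le_two)
  refine ⟨C + L * K, fun m x hx => ?_⟩
  have hremainder := hC m x hx
  have hmoment := hK m x hx
  have hderiv := hL x hx
  simp only [sum_range_succ, range_zero, sum_empty, mul_zero, zero_add, Nat.factorial,
    iteratedDerivWithin_zero, iteratedDerivWithin_one, jacobiDurrmeyerMoment_zero, Nat.cast_one,
    inv_one, one_mul, mul_one, pow_one, Nat.reduceAdd, Nat.reduceDiv] at hremainder hmoment
  set ν : ℝ := (m : ℝ) + a + b + 1
  set f' := derivWithin f (Icc 0 1) x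
  set μ := jacobiDurrmeyerMoment a b m 1 x
  have hν : 0 ≤ ν := by positivity
  have hsplit : jacobiDurrmeyer a b m f x - f x
      = (jacobiDurrmeyer a b m f x - (f x + f' * μ)) + f' * μ := by ring
  rw [hsplit]
  exact mul_abs_add_le hν hremainder (mul_abs_mul_le hν hderiv hmoment)

lemma exists_sq_mul_abs_jacobiDurrmeyerMoment_two_sub_le :
    ∃ C : ℝ, ∀ m : ℕ, ∀ x ∈ Icc (0 : ℝ) 1,
      ((m : ℝ) + a + b + 1) ^ 2 * |jacobiDurrmeyerMoment a b m 2 x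
        - 2 * (m * (x * (1 - x)) / ((m + a + b + 2) * (m + a + b + 3)))| ≤ C := by
  obtain ⟨K, hK⟩ := exists_pow_mul_abs_jacobiDurrmeyerMoment_le (a + 1) b 1
  obtain ⟨L, hL⟩ := exists_pow_mul_abs_jacobiDurrmeyerMoment_le a (b + 1) 1
  refine ⟨(a + 1) * (1 * K) + (b + 1) * (1 * L), fun m x hx => ?_⟩
  have hleft := hK m x hx
  have hright := hL m x hx
  rw [jacobiDurrmeyerMoment_two, add_sub_cancel_right]
  have hx₁ : |1 - x| ≤ 1 := abs_le.2 ⟨by linarith [hx.2], by linarith [hx.1]⟩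
  have hx₀ : |-x| ≤ 1 := abs_le.2 ⟨by linarith [hx.2], by linarith [hx.1]⟩
  set μ := jacobiDurrmeyerMoment (a + 1) b m 1 x
  set μ' := jacobiDurrmeyerMoment a (b + 1) m 1 x
  set ν : ℝ := (m : ℝ) + a + b + 2 with hν
  have hν₀ : 0 < ν := by positivity
  rw [show (m : ℝ) + (a + 1 : ℕ) + b + 1 = ν by push_cast; ring, pow_one] at hleft
  rw [show (m : ℝ) + a + (b + 1 : ℕ) + 1 = ν by push_cast; ring, pow_one] at hright
  have hnumerator : ν * |(a + 1) * (1 - x) * μ - (b + 1) * x * μ'|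
      ≤ (a + 1) * (1 * K) + (b + 1) * (1 * L) := by
    rw [show (a + 1) * (1 - x) * μ - (b + 1) * x * μ'
      = (a + 1) * ((1 - x) * μ) + (b + 1) * (-x * μ') by ring]
    exact mul_abs_add_le hν₀.le
      (mul_abs_mul_le hν₀.le (abs_of_nonneg (by positivity)).le (mul_abs_mul_le hν₀.le hx₁ hleft))
      (mul_abs_mul_le hν₀.le (abs_of_nonneg (by positivity)).le (mul_abs_mul_le hν₀.le hx₀ hright))
  exact sq_mul_abs_div_le (by positivity) (by linarith [hν]) hnumerator

lemma exists_sq_mul_abs_jacobiDurrmeyer_sub_le (hf : ContDiffOn ℝ 4 f (Icc 0 1)) :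
    ∃ C : ℝ, ∀ m : ℕ, ∀ x ∈ Icc (0 : ℝ) 1,
      ((m : ℝ) + a + b + 1) ^ 2 * |jacobiDurrmeyer a b m f x
        - (f x + ((a + 1) * (1 - x) - (b + 1) * x) / (m + a + b + 2)
            * derivWithin f (Icc 0 1) x
          + m * (x * (1 - x)) / ((m + a + b + 2) * (m + a + b + 3))
            * derivWithin (derivWithin f (Icc 0 1)) (Icc 0 1) x)| ≤ C := by
  have hunique : UniqueDiffOn ℝ (Icc (0 : ℝ) 1) := uniqueDiffOn_Icc zero_lt_one
  obtain ⟨C, hC⟩ := exists_pow_mul_abs_jacobiDurrmeyer_sub_sum_le a b 1 (by exact_mod_cast hf)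
  obtain ⟨K₂, hK₂⟩ := exists_sq_mul_abs_jacobiDurrmeyerMoment_two_sub_le a b
  obtain ⟨K₃, hK₃⟩ := exists_pow_mul_abs_jacobiDurrmeyerMoment_le a b 3
  obtain ⟨L₂, hL₂⟩ := isCompact_Icc.exists_bound_of_continuousOn
    (hf.continuousOn_iteratedDerivWithin (m := 2) (by norm_num) hunique)
  obtain ⟨L₃, hL₃⟩ := isCompact_Icc.exists_bound_of_continuousOn
    (hf.continuousOn_iteratedDerivWithin (m := 3) (by norm_num) hunique)
  refine ⟨C + 2⁻¹ * (L₂ * K₂) + 6⁻¹ * (L₃ * K₃), fun m x hx => ?_⟩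
  have hremainder := hC m x hx
  have hmoment₃ := hK₃ m x hx
  rw [← iteratedDerivWithin_one, ← iteratedDerivWithin_succ, iteratedDerivWithin_one]
  simp only [sum_range_succ, range_zero, sum_empty, zero_add, Nat.factorial,
    iteratedDerivWithin_zero, iteratedDerivWithin_one, jacobiDurrmeyerMoment_zero,
    jacobiDurrmeyerMoment_one, Nat.cast_one, inv_one, one_mul, mul_one, Nat.reduceAdd,
    Nat.reduceDiv] at hremainder hmoment₃
  set ν : ℝ := (m : ℝ) + a + b + 1
  set f₁ := derivWithin f (Icc 0 1) x
  set f₂ := iteratedDerivWithin 2 f (Icc 0 1) x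
  set f₃ := iteratedDerivWithin 3 f (Icc 0 1) x
  set μ₁ := ((a + 1) * (1 - x) - (b + 1) * x) / (m + a + b + 2)
  set μ₂ := jacobiDurrmeyerMoment a b m 2 x
  set μ₃ := jacobiDurrmeyerMoment a b m 3 x
  set v := m * (x * (1 - x)) / ((m + a + b + 2) * (m + a + b + 3))
  have hsplit : jacobiDurrmeyer a b m f x - (f x + μ₁ * f₁ + v * f₂)
      = (jacobiDurrmeyer a b m f x - (f x + f₁ * μ₁ + 2⁻¹ * f₂ * μ₂ + 6⁻¹ * f₃ * μ₃))
        + 2⁻¹ * (f₂ * (μ₂ - 2 * v)) + 6⁻¹ * (f₃ * μ₃) := by ring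
  have hν : 0 ≤ ν ^ 2 := by positivity
  rw [hsplit]
  exact mul_abs_add_le hν (mul_abs_add_le hν hremainder
    (mul_abs_mul_le hν (abs_of_nonneg (by norm_num)).le
      (mul_abs_mul_le hν (hL₂ x hx) (hK₂ m x hx))))
    (mul_abs_mul_le hν (abs_of_nonneg (by norm_num)).le (mul_abs_mul_le hν (hL₃ x hx) hmoment₃))

end Asymptotics

section ModifiedDurrmeyer

lemma bern_eq_zero {n : ℕ} {k : ℤ} (hk : k < 0 ∨ (n : ℤ) < k) (x : ℝ) : bern n k x = 0 :=
  if_neg (by omega)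

lemma bern_natCast (n k : ℕ) (x : ℝ) : bern n k x = (bernsteinPolynomial ℝ n k).eval x := by
  rcases le_or_gt k n with hk | hk
  · simp [bern, bernsteinPolynomial, hk]
  · rw [bern_eq_zero (Or.inr (by exact_mod_cast hk)), bernsteinPolynomial.eq_zero_of_lt ℝ hk,
      eval_zero]

lemma sum_bern_sub_natCast_mul (m : ℕ) {d i : ℕ} (hi : i ≤ d) (x : ℝ) (F : ℕ → ℝ) :
    ∑ k ∈ range (m + d + 1), bern m ((k : ℤ) - i) x * F k
      = ∑ k ∈ range (m + 1), (bernsteinPolynomial ℝ m k).eval x * F (k + i) := by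
  rw [show m + d + 1 = i + (m + 1) + (d - i) by omega, sum_range_add, sum_range_add,
    sum_eq_zero fun k hk => ?_, zero_add, sum_eq_zero (s := range (d - i)) fun k _ => ?_, add_zero]
  · refine sum_congr rfl fun k _ => ?_
    rw [← bern_natCast, add_comm k i, Nat.cast_add, add_sub_cancel_left]
  · rw [bern_eq_zero (Or.inr (by push_cast; omega)), zero_mul]
  · rw [bern_eq_zero (Or.inl (by have := mem_range.1 hk; omega)), zero_mul]

lemma DM2_add_two (m : ℕ) (f : ℝ → ℝ) (x : ℝ) :
    DM2 (m + 2) f x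
      = (m * x ^ 2 - (m + 2) * x + 3 / 2) * jacobiDurrmeyer 0 2 m f x
        + 2 * m * x * (1 - x) * jacobiDurrmeyer 1 1 m f x
        + (m * x ^ 2 - (m - 2) * x - 1 / 2) * jacobiDurrmeyer 2 0 m f x := by
  have hcomponent : ∀ i ≤ 2, ∑ k ∈ range (m + 1),
      (bernsteinPolynomial ℝ m k).eval x * betaMean (m + 2) (k + i) f
        = ∑ k ∈ range (m + 2 + 1), bern m ((k : ℤ) - i) x * betaMean (m + 2) k f := fun i hi =>
    (sum_bern_sub_natCast_mul m hi x fun k => betaMean (m + 2) k f).symm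
  simp only [jacobiDurrmeyer, add_assoc m, Nat.reduceAdd]
  rw [hcomponent 0 (by norm_num), hcomponent 1 (by norm_num), hcomponent 2 le_rfl]
  simp only [DM2, mul_sum, ← sum_add_distrib]
  refine sum_congr rfl fun k _ => ?_
  simp only [pM2, betaMean, bern_natCast (m + 2), Nat.add_sub_cancel]
  push_cast
  rw [sub_zero]
  ring

lemma DM2_add_two_eq {f f' f'' : ℝ → ℝ}
    (hf : ∀ t ∈ Icc (0 : ℝ) 1, HasDerivWithinAt f (f' t) (Icc 0 1) t)
    (hf' : ∀ t ∈ Icc (0 : ℝ) 1, HasDerivWithinAt f' (f'' t) (Icc 0 1) t)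
    (hf'' : ContinuousOn f'' (Icc 0 1)) (m : ℕ) (x : ℝ) :
    DM2 (m + 2) f x = jacobiDurrmeyer 1 1 m f x
      + ((2 * x - 1 / 2) * jacobiDurrmeyer 2 1 m f' x
        - (3 / 2 - 2 * x) * jacobiDurrmeyer 1 2 m f' x) / (m + 4)
      - m * (x * (1 - x)) / ((m + 4) * (m + 5)) * jacobiDurrmeyer 2 2 m f'' x := by
  have hf'c : ContinuousOn f' (Icc 0 1) := HasDerivWithinAt.continuousOn hf'
  have hleft := jacobiDurrmeyer_succ_left_sub_succ_right 1 0 m x hf hf'c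
  have hright := jacobiDurrmeyer_succ_left_sub_succ_right 0 1 m x hf hf'c
  have hmiddle := jacobiDurrmeyer_succ_left_sub_succ_right 1 1 m x hf' hf''
  norm_num [add_assoc] at hleft hright hmiddle
  rw [DM2_add_two, ← div_div]
  linear_combination (m * x ^ 2 - (m - 2) * x - 1 / 2) * hleft
    - (m * x ^ 2 - (m + 2) * x + 3 / 2) * hright - m * (x * (1 - x)) / (m + 4) * hmiddle

lemma DM2_add_two_sub_eq {f f' f'' : ℝ → ℝ}
    (hf : ∀ t ∈ Icc (0 : ℝ) 1, HasDerivWithinAt f (f' t) (Icc 0 1) t)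
    (hf' : ∀ t ∈ Icc (0 : ℝ) 1, HasDerivWithinAt f' (f'' t) (Icc 0 1) t)
    (hf'' : ContinuousOn f'' (Icc 0 1)) (m : ℕ) (x : ℝ) :
    DM2 (m + 2) f x - f x
      = (jacobiDurrmeyer 1 1 m f x - (f x + ((2 * (1 - x) - 2 * x) / (m + 4) * f' x
          + m * (x * (1 - x)) / ((m + 4) * (m + 5)) * f'' x)))
        + (2 * x - 1 / 2) * ((jacobiDurrmeyer 2 1 m f' x - f' x) / (m + 4))
        + -(3 / 2 - 2 * x) * ((jacobiDurrmeyer 1 2 m f' x - f' x) / (m + 4))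
        + -(m * (x * (1 - x)) / (m + 4))
          * ((jacobiDurrmeyer 2 2 m f'' x - f'' x) / (m + 5)) := by
  rw [DM2_add_two_eq hf hf' hf'']
  field_simp
  ring

lemma exists_sq_mul_abs_DM2_sub_le {f : ℝ → ℝ} (hf : ContDiffOn ℝ 4 f (Icc 0 1)) :
    ∃ C : ℝ, ∀ m : ℕ, ∀ x ∈ Icc (0 : ℝ) 1,
      ((m : ℝ) + 3) ^ 2 * |DM2 (m + 2) f x - f x| ≤ C := by
  set f' := derivWithin f (Icc 0 1)
  set f'' := derivWithin f' (Icc 0 1)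
  have hunique : UniqueDiffOn ℝ (Icc (0 : ℝ) 1) := uniqueDiffOn_Icc zero_lt_one
  have hf' : ContDiffOn ℝ 3 f' (Icc 0 1) := hf.derivWithin hunique (by norm_num)
  have hf'' : ContDiffOn ℝ 2 f'' (Icc 0 1) := hf'.derivWithin hunique (by norm_num)
  obtain ⟨C, hC⟩ := exists_sq_mul_abs_jacobiDurrmeyer_sub_le 1 1 hf
  obtain ⟨K₂₁, hK₂₁⟩ := exists_mul_abs_jacobiDurrmeyer_sub_le 2 1 (hf'.of_le (by norm_num))
  obtain ⟨K₁₂, hK₁₂⟩ := exists_mul_abs_jacobiDurrmeyer_sub_le 1 2 (hf'.of_le (by norm_num))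
  obtain ⟨K₂₂, hK₂₂⟩ := exists_mul_abs_jacobiDurrmeyer_sub_le 2 2 hf''
  refine ⟨C + 2 * K₂₁ + 2 * K₁₂ + 1 * K₂₂, fun m x hx => ?_⟩
  have hvar : |-(m * (x * (1 - x)) / ((m : ℝ) + 4))| ≤ 1 := by
    have h₀ : 0 ≤ x * (1 - x) := mul_nonneg hx.1 (sub_nonneg.2 hx.2)
    rw [abs_neg, abs_of_nonneg (by positivity), div_le_one (by positivity)]
    linarith [natCast_mul_mul_one_sub_le m hx]
  have hC := hC m x hx
  have hK₂₁ := hK₂₁ m x hx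
  have hK₁₂ := hK₁₂ m x hx
  have hK₂₂ := hK₂₂ m x hx
  norm_num [add_assoc] at hC hK₂₁ hK₁₂ hK₂₂
  have hν : (0 : ℝ) ≤ m + 3 := by positivity
  have hdiv : ∀ {ω y K : ℝ}, (m : ℝ) + 3 < ω → ω * |y| ≤ K → ((m : ℝ) + 3) ^ 2 * |y / ω| ≤ K :=
    sq_mul_abs_div_le hν
  rw [DM2_add_two_sub_eq (fun t ht => (hf.differentiableOn (by norm_num) t ht).hasDerivWithinAt)
    (fun t ht => (hf'.differentiableOn (by norm_num) t ht).hasDerivWithinAt) hf''.continuousOn]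
  refine mul_abs_add_le (sq_nonneg _) (mul_abs_add_le (sq_nonneg _) (mul_abs_add_le (sq_nonneg _)
    hC (mul_abs_mul_le (sq_nonneg _) (abs_le.2 ⟨?_, ?_⟩) (hdiv ?_ hK₂₁)))
    (mul_abs_mul_le (sq_nonneg _) (abs_le.2 ⟨?_, ?_⟩) (hdiv ?_ hK₁₂)))
    (mul_abs_mul_le (sq_nonneg _) hvar (hdiv ?_ hK₂₂)) <;> linarith [hx.1, hx.2]

theorem DM2_order_of_approximation_general (f : ℝ → ℝ) (hf : ContDiffOn ℝ 4 f (Icc 0 1)) :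
    ∃ C > (0 : ℝ), ∀ n : ℕ, 2 ≤ n → ∀ x ∈ Icc (0 : ℝ) 1,
      |DM2 n f x - f x| ≤ C / (n : ℝ) ^ 2 := by
  obtain ⟨C, hC⟩ := exists_sq_mul_abs_DM2_sub_le hf
  refine ⟨|C| + 1, by positivity, fun n hn x hx => ?_⟩
  obtain ⟨m, rfl⟩ := Nat.exists_eq_add_of_le' hn
  rw [le_div_iff₀' (by positivity)]
  calc ((m + 2 : ℕ) : ℝ) ^ 2 * |DM2 (m + 2) f x - f x|
      ≤ ((m : ℝ) + 3) ^ 2 * |DM2 (m + 2) f x - f x| := by gcongr; push_cast; linarith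
    _ ≤ C := hC m x hx
    _ ≤ |C| + 1 := (le_abs_self C).trans (lt_add_one _).le

end ModifiedDurrmeyer

theorem DM2_order_of_approximation (f : ℝ → ℝ) (hf : ContDiffOn ℝ 6 f (Set.Icc 0 1))
    (x : ℝ) (hx : x ∈ Set.Icc (0:ℝ) 1) :
    ∃ C > (0:ℝ), ∃ N : ℕ, ∀ n : ℕ, N ≤ n →
      |DM2 n f x - f x| ≤ C / (n : ℝ) ^ 2 :=
  have ⟨C, hC, h⟩ := DM2_order_of_approximation_general f (hf.of_le (by norm_num))
  ⟨C, hC, 2, fun n hn => h n hn x hx⟩
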